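/- Let (N,⪯,F) be a transitive-closed description of a simply dependent multimodal logic. Then the sequent calculus G_(N,⪯,F)ConW is sound with respect to L_(N,⪯,F): for every formula A, if the sequent ⇒ A is derivable in G_(N,⪯,F)ConW then A ∈ L_(N,⪯,F). -/

import Mathlib

/-- Multimodal formulas with modalities indexed by `I`. -/
inductive Fm (I : Type) : Type
  | var : ℕ → Fm I
  | bot : Fm I
  | top : Fm I
  | neg : Fm I → Fm I
  | and : Fm I → Fm I → Fm I
  | or : Fm I → Fm I → Fm I
  | imp : Fm I → Fm I → Fm I
  | box : I → Fm I → Fm I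

namespace Fm

/-- Evaluation of the propositional structure of a formula under an assignment
`v` of truth values to formulas (only used on atoms, i.e. propositional
variables and boxed formulas). -/
def evalP {I : Type} (v : Fm I → Prop) : Fm I → Prop
  | var n => v (var n)
  | bot => False
  | top => True
  | neg A => ¬ evalP v A
  | and A B => evalP v A ∧ evalP v B
  | or A B => evalP v A ∨ evalP v B
  | imp A B => evalP v A → evalP v B
  | box i A => v (box i A)

/-- `A` is an instance of a classical propositional tautology. -/
def Taut {I : Type} (A : Fm I) : Prop := ∀ v, evalP v A

end Fm

/-- An element of the set `𝔏` of extensions of modal logic `K` with axioms from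
`{D, T, 4}`, given by the choice of added axioms. -/
structure KExt where
  d : Bool
  t : Bool
  four : Bool

/-- Hilbert-style theoremhood in the (monomodal) extension of `K` described by
`L : KExt`: classical tautologies, modus ponens, the `K` axiom, necessitation,
and the chosen axioms among `D`, `T`, `4`. -/
inductive KThm (L : KExt) : Fm Unit → Prop
  | taut {A} : Fm.Taut A → KThm L A
  | mp {A B} : KThm L (.imp A B) → KThm L A → KThm L B
  | axK {A B} : KThm L (.imp (.box () (.imp A B)) (.imp (.box () A) (.box () B)))
  | nec {A} : KThm L A → KThm L (.box () A)
  | axD : L.d = true → KThm L (.neg (.box () .bot))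
  | axT {A} : L.t = true → KThm L (.imp (.box () A) A)
  | ax4 {A} : L.four = true → KThm L (.imp (.box () A) (.box () (.box () A)))

/-- Containment of logics: every theorem of `L` is a theorem of `L'`. -/
def KExt.le (L L' : KExt) : Prop := ∀ A, KThm L A → KThm L' A

/-- The logic `KD`. -/
def KD : KExt := ⟨true, false, false⟩
/-- The logic `KT`. -/
def KT : KExt := ⟨false, true, false⟩
/-- The logic `K4`. -/
def K4 : KExt := ⟨false, false, true⟩

/-- A description `(N, ⪯, F)` of a simply dependent multimodal logic: a finite
set `N` of natural numbers, a partial order `⪯` on `N`, and a map `F` assigning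
to each index an extension of `K` with axioms from `{D, T, 4}`. -/
structure Descr where
  N : Finset ℕ
  le : ℕ → ℕ → Prop
  le_refl : ∀ i ∈ N, le i i
  le_trans : ∀ i ∈ N, ∀ j ∈ N, ∀ k ∈ N, le i j → le j k → le i k
  le_antisymm : ∀ i ∈ N, ∀ j ∈ N, le i j → le j i → i = j
  F : ℕ → KExt

/-- Hilbert-style theoremhood in the simply dependent multimodal logic
`L_(N,⪯,F)`: classical tautologies, modus ponens, and for each `i ∈ N` the `K`
axiom and necessitation rule for `□ᵢ`, the axioms of `F i` instantiated with
`□ᵢ`, together with the interaction axioms `□ⱼA → □ᵢA` for `i ⪯ j`. -/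
inductive MThm (D : Descr) : Fm ℕ → Prop
  | taut {A} : Fm.Taut A → MThm D A
  | mp {A B} : MThm D (.imp A B) → MThm D A → MThm D B
  | axK {i A B} : i ∈ D.N → MThm D (.imp (.box i (.imp A B)) (.imp (.box i A) (.box i B)))
  | nec {i A} : i ∈ D.N → MThm D A → MThm D (.box i A)
  | axD {i} : i ∈ D.N → (D.F i).d = true → MThm D (.neg (.box i .bot))
  | axT {i A} : i ∈ D.N → (D.F i).t = true → MThm D (.imp (.box i A) A)
  | ax4 {i A} : i ∈ D.N → (D.F i).four = true → MThm D (.imp (.box i A) (.box i (.box i A)))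
  | inter {i j A} : i ∈ D.N → j ∈ D.N → D.le i j → MThm D (.imp (.box j A) (.box i A))

open Classical in
/-- The upset `↑i = {j ∈ N : i ⪯ j}` of an index. -/
noncomputable def Descr.up (D : Descr) (i : ℕ) : Finset ℕ :=
  D.N.filter fun j => D.le i j

/-- A description is transitive-closed if for all `i ⪯ j` in `N`,
`K4 ⊆ F i` implies `K4 ⊆ F j`. -/
def TransClosed (D : Descr) : Prop :=
  ∀ i ∈ D.N, ∀ j ∈ D.N, D.le i j → K4.le (D.F i) → K4.le (D.F j)

/-- The sequent calculus `G_(N,⪯,F)ConW`: the standard two-sided multiset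
sequent calculus for classical propositional logic with atomic initial
sequents, explicit weakening and contraction, and the modal rules `kᵢ`, `dᵢ`,
`tᵢ`.  In the modal rules the families `Gm j` (which must be empty for indices
`j` whose logic does not contain `K4`) and `Sg j` are the context multisets
`Γⱼ` and `Σⱼ` from the rules. -/
inductive GD (D : Descr) : Multiset (Fm ℕ) → Multiset (Fm ℕ) → Prop
  | init {Γ Δ : Multiset (Fm ℕ)} {m : ℕ} : GD D (Fm.var m ::ₘ Γ) (Fm.var m ::ₘ Δ)
  | botL {Γ Δ} : GD D (Fm.bot ::ₘ Γ) Δ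
  | topR {Γ Δ} : GD D Γ (Fm.top ::ₘ Δ)
  | negL {Γ Δ A} : GD D Γ (A ::ₘ Δ) → GD D (Fm.neg A ::ₘ Γ) Δ
  | negR {Γ Δ A} : GD D (A ::ₘ Γ) Δ → GD D Γ (Fm.neg A ::ₘ Δ)
  | andL {Γ Δ A B} : GD D (A ::ₘ B ::ₘ Γ) Δ → GD D (Fm.and A B ::ₘ Γ) Δ
  | andR {Γ Δ A B} : GD D Γ (A ::ₘ Δ) → GD D Γ (B ::ₘ Δ) → GD D Γ (Fm.and A B ::ₘ Δ)
  | orL {Γ Δ A B} : GD D (A ::ₘ Γ) Δ → GD D (B ::ₘ Γ) Δ → GD D (Fm.or A B ::ₘ Γ) Δ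
  | orR {Γ Δ A B} : GD D Γ (A ::ₘ B ::ₘ Δ) → GD D Γ (Fm.or A B ::ₘ Δ)
  | impL {Γ Δ A B} : GD D (B ::ₘ Γ) Δ → GD D Γ (A ::ₘ Δ) → GD D (Fm.imp A B ::ₘ Γ) Δ
  | impR {Γ Δ A B} : GD D (A ::ₘ Γ) (B ::ₘ Δ) → GD D Γ (Fm.imp A B ::ₘ Δ)
  | wkL {Γ Δ A} : GD D Γ Δ → GD D (A ::ₘ Γ) Δ
  | wkR {Γ Δ A} : GD D Γ Δ → GD D Γ (A ::ₘ Δ)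
  | conL {Γ Δ A} : GD D (A ::ₘ A ::ₘ Γ) Δ → GD D (A ::ₘ Γ) Δ
  | conR {Γ Δ A} : GD D Γ (A ::ₘ A ::ₘ Δ) → GD D Γ (A ::ₘ Δ)
  | ruleK {i : ℕ} {Gm Sg : ℕ → Multiset (Fm ℕ)} {Om Xi : Multiset (Fm ℕ)} {A : Fm ℕ} :
      i ∈ D.N → (∀ j, ¬ K4.le (D.F j) → Gm j = 0) →
      GD D (∑ j ∈ D.up i, ((Gm j).map (Fm.box j) + Sg j)) {A} →
      GD D (Om + ∑ j ∈ D.up i, ((Gm j).map (Fm.box j) + (Sg j).map (Fm.box j)))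
        (Fm.box i A ::ₘ Xi)
  | ruleD {i : ℕ} {Gm Sg : ℕ → Multiset (Fm ℕ)} {Om Xi : Multiset (Fm ℕ)} :
      i ∈ D.N → KD.le (D.F i) → (∀ j, ¬ K4.le (D.F j) → Gm j = 0) →
      GD D (∑ j ∈ D.up i, ((Gm j).map (Fm.box j) + Sg j)) 0 →
      GD D (Om + ∑ j ∈ D.up i, ((Gm j).map (Fm.box j) + (Sg j).map (Fm.box j))) Xi
  | ruleT {i : ℕ} {Sg : ℕ → Multiset (Fm ℕ)} {Om Xi : Multiset (Fm ℕ)} :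
      i ∈ D.N → KT.le (D.F i) →
      GD D (Om + ∑ j ∈ D.up i, Sg j) Xi →
      GD D (Om + ∑ j ∈ D.up i, (Sg j).map (Fm.box j)) Xi

/-!
A sequent `Γ ⇒ Δ` is read as local consequence modulo `L_(N,⪯,F)`: one theorem of the logic has
`⋀ Γ → ⋁ Δ` as a propositional consequence. The propositional and structural rules preserve this
by a truth-table check.

For the modal rules, fix `i ⪯ j`. If `K4 ⊆ F(j)`, then `□ⱼB → □ⱼ□ⱼB → □ᵢ□ⱼB`, and always
`□ⱼB → □ᵢB`; so the antecedent of the conclusion of `kᵢ` or `dᵢ` entails `□ᵢB` for every `B` in the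
antecedent of the premise, and boxing the premise by normality of `□ᵢ` gives the conclusion, using
`¬□ᵢ⊥` in the case of `dᵢ`. For `tᵢ` the chain is `□ⱼB → □ᵢB → B`.

An inclusion such as `K4 ⊆ F(j)` is an inclusion of monomodal logics, not of axiom lists; it
yields the axiom for `□ⱼ` because every theorem of `F(j)` becomes a theorem of `L_(N,⪯,F)` when `□`
is read as `□ⱼ` and propositional variables as arbitrary formulas.
-/

namespace Fm

variable {I J : Type} {v : Fm I → Prop} {Γ Γ' Δ Δ' : Multiset (Fm I)} {A : Fm I}

/-- Simultaneous substitution: variables are replaced by formulas according to `σ`, and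
modalities are reindexed along `f`. It embeds monomodal formulas into multimodal ones. -/
def subst (σ : ℕ → Fm J) (f : I → J) : Fm I → Fm J
  | var n => σ n
  | bot => bot
  | top => top
  | neg A => neg (A.subst σ f)
  | and A B => and (A.subst σ f) (B.subst σ f)
  | or A B => or (A.subst σ f) (B.subst σ f)
  | imp A B => imp (A.subst σ f) (B.subst σ f)
  | box i A => box (f i) (A.subst σ f)

theorem evalP_subst (σ : ℕ → Fm J) (f : I → J) (v : Fm J → Prop) (A : Fm I) :
    evalP v (A.subst σ f) ↔ evalP (fun B => evalP v (B.subst σ f)) A := by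
  induction A <;> simp_all [subst, evalP]

theorem Taut.subst (hA : Taut A) (σ : ℕ → Fm J) (f : I → J) : Taut (A.subst σ f) :=
  fun v => (evalP_subst σ f v A).2 (hA _)

/-- Truth of the sequent `Γ ⇒ Δ` under the propositional assignment `v`. -/
def EvalSeq (v : Fm I → Prop) (Γ Δ : Multiset (Fm I)) : Prop :=
  (∀ A ∈ Γ, evalP v A) → ∃ B ∈ Δ, evalP v B

theorem EvalSeq.mono (h : EvalSeq v Γ Δ) (hΓ : Γ ⊆ Γ') (hΔ : Δ ⊆ Δ') : EvalSeq v Γ' Δ' :=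
  fun hv => (h fun A hA => hv A (hΓ hA)).imp fun _ hB => ⟨hΔ hB.1, hB.2⟩

@[simp]
theorem evalSeq_cons_left : EvalSeq v (A ::ₘ Γ) Δ ↔ (evalP v A → EvalSeq v Γ Δ) := by
  simp [EvalSeq]

@[simp]
theorem evalSeq_cons_right : EvalSeq v Γ (A ::ₘ Δ) ↔ evalP v A ∨ EvalSeq v Γ Δ := by
  simp only [EvalSeq, Multiset.mem_cons, exists_eq_or_imp]
  tauto

@[simp]
theorem evalSeq_singleton_right : EvalSeq v Γ {A} ↔ evalP v A ∨ EvalSeq v Γ 0 :=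
  evalSeq_cons_right

@[simp]
theorem not_evalSeq_zero_zero : ¬ EvalSeq v 0 0 := by
  simp [EvalSeq]

end Fm

/-- `Λ` is a set of formulas containing the classical tautologies and closed under modus
ponens. -/
class IsClassical {I : Type} (Λ : Fm I → Prop) : Prop where
  taut {A : Fm I} : Fm.Taut A → Λ A
  mp {A B : Fm I} : Λ (.imp A B) → Λ A → Λ B

/-- The modality `□ᵢ` is normal in `Λ`. The propositional part of normality is left to
`IsClassical`. -/
structure IsNormal {I : Type} (Λ : Fm I → Prop) (i : I) : Prop where
  axK {A B : Fm I} : Λ (.imp (.box i (.imp A B)) (.imp (.box i A) (.box i B)))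
  nec {A : Fm I} : Λ A → Λ (.box i A)

/-- Local consequence modulo `Λ`: some theorem of `Λ` propositionally implies `⋀ Γ → ⋁ Δ`.
A single theorem suffices because a classical `Λ` is closed under conjunction. -/
def Entails {I : Type} (Λ : Fm I → Prop) (Γ Δ : Multiset (Fm I)) : Prop :=
  ∃ C, Λ C ∧ ∀ v, Fm.evalP v C → Fm.EvalSeq v Γ Δ

section Classical

variable {I : Type} {Λ : Fm I → Prop}
  {Γ Γ' Γ₁ Γ₂ Δ Δ' Δ₁ Δ₂ : Multiset (Fm I)} {A B C : Fm I}

theorem Entails.map (h : Entails Λ Γ Δ) (hv : ∀ v, Fm.EvalSeq v Γ Δ → Fm.EvalSeq v Γ' Δ') :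
    Entails Λ Γ' Δ' :=
  let ⟨C, hC, hCv⟩ := h
  ⟨C, hC, fun v hvC => hv v (hCv v hvC)⟩

theorem Entails.mono (h : Entails Λ Γ Δ) (hΓ : Γ ⊆ Γ') (hΔ : Δ ⊆ Δ') : Entails Λ Γ' Δ' :=
  h.map fun _ hv => hv.mono hΓ hΔ

theorem Entails.weaken_left (h : Entails Λ Γ Δ) (Ω : Multiset (Fm I)) : Entails Λ (Ω + Γ) Δ :=
  h.mono (Multiset.subset_of_le (Multiset.le_add_left Γ Ω)) (Multiset.Subset.refl Δ)

theorem entails_of_imp (h : Λ (.imp A B)) (hA : A ∈ Γ) : Entails Λ Γ {B} :=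
  ⟨_, h, fun _ hAB hΓ => ⟨B, Multiset.mem_singleton_self B, hAB (hΓ A hA)⟩⟩

variable [IsClassical Λ]

theorem IsClassical.and (hA : Λ A) (hB : Λ B) : Λ (.and A B) :=
  mp (mp (taut (A := .imp A (.imp B (.and A B))) fun _ => And.intro) hA) hB

theorem IsClassical.imp_trans (hAB : Λ (.imp A B)) (hBC : Λ (.imp B C)) : Λ (.imp A C) :=
  mp (mp (taut (A := .imp (.imp A B) (.imp (.imp B C) (.imp A C)))
    fun _ hAB hBC hA => hBC (hAB hA)) hAB) hBC

theorem entails_zero_singleton : Entails Λ 0 {A} ↔ Λ A := by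
  constructor
  · rintro ⟨C, hC, h⟩
    have hCA : Fm.Taut (.imp C A) := fun v hv => by simpa using h v hv
    exact IsClassical.mp (IsClassical.taut hCA) hC
  · exact fun h => ⟨A, h, fun v hv => by simp [hv]⟩

theorem entails_of_evalSeq (hv : ∀ v, Fm.EvalSeq v Γ Δ) : Entails Λ Γ Δ :=
  ⟨.top, IsClassical.taut fun _ => trivial, fun v _ => hv v⟩

theorem entails_of_mem (hA : A ∈ Γ) : Entails Λ Γ {A} :=
  entails_of_imp (IsClassical.taut (A := .imp A A) fun _ => id) hA

theorem Entails.map₂ (h₁ : Entails Λ Γ₁ Δ₁) (h₂ : Entails Λ Γ₂ Δ₂)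
    (hv : ∀ v, Fm.EvalSeq v Γ₁ Δ₁ → Fm.EvalSeq v Γ₂ Δ₂ → Fm.EvalSeq v Γ Δ) : Entails Λ Γ Δ :=
  let ⟨_, hC₁, hCv₁⟩ := h₁
  let ⟨_, hC₂, hCv₂⟩ := h₂
  ⟨_, IsClassical.and hC₁ hC₂, fun v hvC => hv v (hCv₁ v hvC.1) (hCv₂ v hvC.2)⟩

theorem Entails.cut (h₁ : Entails Λ Γ (A ::ₘ Δ)) (h₂ : Entails Λ (A ::ₘ Γ) Δ) :
    Entails Λ Γ Δ :=
  h₁.map₂ h₂ fun _ hv₁ hv₂ => (Fm.evalSeq_cons_right.1 hv₁).elim (Fm.evalSeq_cons_left.1 hv₂) id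

theorem Entails.of_neg (h : Entails Λ Γ {A}) (hA : Λ (.neg A)) : Entails Λ Γ Δ :=
  h.map₂ (entails_zero_singleton.2 hA) fun v hv hnA => by
    simp only [Fm.evalSeq_singleton_right, Fm.not_evalSeq_zero_zero, Fm.evalP, or_false]
      at hv hnA
    exact (hv.resolve_left hnA).mono (Multiset.Subset.refl Γ) (Multiset.zero_subset Δ)

theorem Entails.trans (hΓ : ∀ A ∈ Γ', Entails Λ Γ {A}) (h : Entails Λ Γ' Δ) :
    Entails Λ Γ Δ := by
  suffices multicut : Entails Λ (Γ + Γ') Δ → Entails Λ Γ Δ from multicut (h.weaken_left Γ)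
  clear h
  induction Γ' using Multiset.induction_on with
  | empty => simp
  | cons A Γ' ih =>
    intro h
    rw [Multiset.add_cons] at h
    have hA : Entails Λ (Γ + Γ') (A ::ₘ Δ) := (hΓ A (Multiset.mem_cons_self A Γ')).mono
      (Multiset.subset_of_le (Multiset.le_add_right Γ Γ')) (by simp)
    exact ih (fun B hB => hΓ B (Multiset.mem_cons_of_mem hB)) (hA.cut h)

theorem Entails.map_box {i : I} (hi : IsNormal Λ i) (h : Entails Λ Γ {A}) :
    Entails Λ (Γ.map (.box i)) {.box i A} := by
  induction Γ using Multiset.induction_on generalizing A with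
  | empty => exact entails_zero_singleton.2 (hi.nec (entails_zero_singleton.1 h))
  | cons B Γ ih =>
    have hBA : Entails Λ Γ {.imp B A} := h.map fun v hv => by
      simp only [Fm.evalSeq_cons_left, Fm.evalSeq_singleton_right, Fm.evalP] at hv ⊢
      tauto
    refine (ih hBA).map₂ (entails_zero_singleton.2 (hi.axK (A := B) (B := A))) fun v hv hK => ?_
    simp only [Multiset.map_cons, Fm.evalSeq_cons_left, Fm.evalSeq_singleton_right, Fm.evalP,
      Fm.not_evalSeq_zero_zero] at hv hK ⊢
    tauto

end Classical

section Multimodal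

variable {D : Descr} {i j : ℕ} {A : Fm ℕ}

instance MThm.isClassical : IsClassical (MThm D) := ⟨.taut, .mp⟩

theorem MThm.isNormal (hi : i ∈ D.N) : IsNormal (MThm D) i := ⟨.axK hi, .nec hi⟩

theorem KThm.subst {A : Fm Unit} (h : KThm (D.F i) A) (hi : i ∈ D.N) (σ : ℕ → Fm ℕ) :
    MThm D (A.subst σ fun _ => i) := by
  induction h with
  | taut h => exact .taut (h.subst σ _)
  | mp _ _ ihAB ihA => exact .mp ihAB ihA
  | axK => exact .axK hi
  | nec _ ih => exact .nec hi ih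
  | axD h => exact .axD hi h
  | axT h => exact .axT hi h
  | ax4 h => exact .ax4 hi h

theorem MThm.neg_box_bot (hi : i ∈ D.N) (hD : KD.le (D.F i)) : MThm D (.neg (.box i .bot)) :=
  (hD _ (.axD rfl)).subst hi .var

theorem MThm.box_imp_self (hi : i ∈ D.N) (hT : KT.le (D.F i)) : MThm D (.imp (.box i A) A) :=
  (hT _ (.axT (A := .var 0) rfl)).subst hi fun _ => A

theorem MThm.box_imp_box_box (hi : i ∈ D.N) (h4 : K4.le (D.F i)) :
    MThm D (.imp (.box i A) (.box i (.box i A))) :=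
  (h4 _ (.ax4 (A := .var 0) rfl)).subst hi fun _ => A

theorem Descr.mem_up : j ∈ D.up i ↔ j ∈ D.N ∧ D.le i j := by
  simp [Descr.up]

theorem MThm.box_imp_box_of_mem_up (hi : i ∈ D.N) (hj : j ∈ D.up i) :
    MThm D (.imp (.box j A) (.box i A)) :=
  .inter hi (Descr.mem_up.1 hj).1 (Descr.mem_up.1 hj).2

variable {Gm Sg : ℕ → Multiset (Fm ℕ)}

theorem Entails.box_of_sum_up (hi : i ∈ D.N) (hG : ∀ j, ¬ K4.le (D.F j) → Gm j = 0)
    (h : Entails (MThm D) (∑ j ∈ D.up i, ((Gm j).map (.box j) + Sg j)) {A}) :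
    Entails (MThm D) (∑ j ∈ D.up i, ((Gm j).map (.box j) + (Sg j).map (.box j)))
      {.box i A} := by
  refine (h.map_box (MThm.isNormal hi)).trans fun X hX => ?_
  obtain ⟨B, hB, rfl⟩ := Multiset.mem_map.1 hX
  obtain ⟨j, hj, hB⟩ := Multiset.mem_sum.1 hB
  rcases Multiset.mem_add.1 hB with hB | hB
  · have h4 : K4.le (D.F j) := by
      by_contra h4
      simp [hG j h4] at hB
    obtain ⟨C, -, rfl⟩ := Multiset.mem_map.1 hB
    have hC : MThm D (.imp (.box j C) (.box i (.box j C))) :=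
      IsClassical.imp_trans (.box_imp_box_box (Descr.mem_up.1 hj).1 h4)
        (.box_imp_box_of_mem_up hi hj)
    exact entails_of_imp hC (Multiset.mem_sum.2 ⟨j, hj, Multiset.mem_add.2 (.inl hB)⟩)
  · exact entails_of_imp (.box_imp_box_of_mem_up hi hj)
      (Multiset.mem_sum.2 ⟨j, hj, Multiset.mem_add.2 (.inr (Multiset.mem_map_of_mem _ hB))⟩)

theorem Entails.of_sum_up {Ω Δ : Multiset (Fm ℕ)} (hi : i ∈ D.N) (hT : KT.le (D.F i))
    (h : Entails (MThm D) (Ω + ∑ j ∈ D.up i, Sg j) Δ) :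
    Entails (MThm D) (Ω + ∑ j ∈ D.up i, (Sg j).map (.box j)) Δ := by
  refine h.trans fun B hB => ?_
  rcases Multiset.mem_add.1 hB with hB | hB
  · exact entails_of_mem (Multiset.mem_add.2 (.inl hB))
  · obtain ⟨j, hj, hB⟩ := Multiset.mem_sum.1 hB
    have hjB : MThm D (.imp (.box j B) B) :=
      IsClassical.imp_trans (.box_imp_box_of_mem_up hi hj) (.box_imp_self hi hT)
    exact entails_of_imp hjB (Multiset.mem_add.2
      (.inr (Multiset.mem_sum.2 ⟨j, hj, Multiset.mem_map_of_mem _ hB⟩)))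

theorem GD.entails {Γ Δ : Multiset (Fm ℕ)} (h : GD D Γ Δ) : Entails (MThm D) Γ Δ := by
  induction h with
  | init | botL | topR =>
    refine entails_of_evalSeq fun v => ?_
    simp only [Fm.evalSeq_cons_left, Fm.evalSeq_cons_right, Fm.evalP]
    tauto
  | negL _ ih | negR _ ih | andL _ ih | orR _ ih | impR _ ih | wkL _ ih | wkR _ ih | conL _ ih
  | conR _ ih =>
    refine ih.map fun v hv => ?_
    simp only [Fm.evalSeq_cons_left, Fm.evalSeq_cons_right, Fm.evalP] at hv ⊢
    tauto
  | andR _ _ ih₁ ih₂ | orL _ _ ih₁ ih₂ | impL _ _ ih₁ ih₂ =>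
    refine ih₁.map₂ ih₂ fun v hv₁ hv₂ => ?_
    simp only [Fm.evalSeq_cons_left, Fm.evalSeq_cons_right, Fm.evalP] at hv₁ hv₂ ⊢
    tauto
  | ruleK hi hG _ ih =>
    exact ((ih.box_of_sum_up hi hG).weaken_left _).mono (Multiset.Subset.refl _) (by simp)
  | ruleD hi hD hG _ ih =>
    have hbot := ih.mono (Multiset.Subset.refl _) (Multiset.zero_subset {.bot})
    exact ((hbot.box_of_sum_up hi hG).of_neg (MThm.neg_box_bot hi hD)).weaken_left _
  | ruleT hi hT _ ih => exact ih.of_sum_up hi hT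

end Multimodal

theorem GD_sound_general (D : Descr) (A : Fm ℕ) : GD D 0 {A} → MThm D A :=
  fun h => entails_zero_singleton.1 h.entails

/-- Soundness of the sequent calculus `G_(N,⪯,F)ConW` for a transitive-closed
description: if `⇒ A` is derivable, then `A` is a theorem of `L_(N,⪯,F)`. -/
theorem GD_sound (D : Descr) (htc : TransClosed D) (A : Fm ℕ) :
    GD D 0 {A} → MThm D A :=
  GD_sound_general D A
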